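/- arXiv:2507.02848 — 2 statements merged into one kernel-verified Lean document; each statement's English description precedes it below -/
import Mathlib

section
/- For every R-linear map D : B → B and all elements b, b', b₀, b₁, …, b_k ∈ B, one has φ_D((b ⊗ b'^op)·(da₀:=db₀)·(db₁)⋯(db_k)) = (δ_{b₀} ∘ δ_{b₁} ∘ ⋯ ∘ δ_{b_k})(D)(b) · b', where the product (b ⊗ b'^op)·(db₀)·(db₁)⋯(db_k) is taken in the algebra B^e. -/
open TensorProduct MulOpposite

/-- The universal differential `da = 1 ⊗ aᵒᵖ - a ⊗ 1` in `Bᵉ = B ⊗[R] Bᵐᵒᵖ`. -/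
noncomputable def duniv (R : Type*) {B : Type*} [CommRing R] [Ring B] [Algebra R B] (a : B) :
    B ⊗[R] Bᵐᵒᵖ :=
  (1 : B) ⊗ₜ[R] op a - a ⊗ₜ[R] (1 : Bᵐᵒᵖ)

/-- `δ_b(D)(a) = D(a) * b - D(a * b)`. -/
noncomputable def deltaOp (R : Type*) {B : Type*} [CommRing R] [Ring B] [Algebra R B] (b : B)
    (D : B →ₗ[R] B) : B →ₗ[R] B :=
  LinearMap.mulRight R b ∘ₗ D - D ∘ₗ LinearMap.mulRight R b

/-- `φ_D : B ⊗[R] Bᵐᵒᵖ →ₗ[R] B`, `φ_D (a ⊗ cᵒᵖ) = D a * c`. -/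
noncomputable def phiD (R : Type*) {B : Type*} [CommRing R] [Ring B] [Algebra R B]
    (D : B →ₗ[R] B) : B ⊗[R] Bᵐᵒᵖ →ₗ[R] B :=
  TensorProduct.lift (((LinearMap.mul R B).comp D).compl₂
    ((opLinearEquiv R : B ≃ₗ[R] Bᵐᵒᵖ).symm.toLinearMap))

theorem phiD_tmul {R B : Type*} [CommRing R] [Ring B] [Algebra R B]
    (D : B →ₗ[R] B) (a : B) (c : Bᵐᵒᵖ) : phiD R D (a ⊗ₜ[R] c) = D a * unop c := by
  simp [phiD]

theorem phiD_mul_duniv {R B : Type*} [CommRing R] [Ring B] [Algebra R B]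
    (D : B →ₗ[R] B) (a : B) (x : B ⊗[R] Bᵐᵒᵖ) :
    phiD R D (x * duniv R a) = phiD R (deltaOp R a D) x := by
  induction x using TensorProduct.induction_on with
  | zero => simp
  | tmul b c =>
    simp [duniv, mul_sub, Algebra.TensorProduct.tmul_mul_tmul, phiD_tmul, deltaOp, sub_mul,
      mul_assoc]
  | add x y hx hy => rw [add_mul, map_add, map_add, hx, hy]

theorem phiD_mul_prod_map_duniv {R B : Type*} [CommRing R] [Ring B] [Algebra R B]
    (D : B →ₗ[R] B) (l : List B) (x : B ⊗[R] Bᵐᵒᵖ) :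
    phiD R D (x * (l.map (duniv R)).prod) = phiD R (l.foldr (deltaOp R) D) x := by
  induction l generalizing x with
  | nil => simp
  | cons a l ih =>
    rw [List.map_cons, List.prod_cons, ← mul_assoc, ih, phiD_mul_duniv, List.foldr_cons]

theorem stmt0 {R B : Type*} [CommRing R] [Ring B] [Algebra R B]
    (D : B →ₗ[R] B) (b b' : B) (k : ℕ) (f : Fin (k + 1) → B) :
    phiD R D ((b ⊗ₜ[R] op b') * (List.ofFn fun i => duniv R (f i)).prod) =
      ((List.ofFn f).foldr (deltaOp R) D) b * b' := by
  have h : (List.ofFn fun i => duniv R (f i)) = (List.ofFn f).map (duniv R) := by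
    rw [List.map_ofFn, Function.comp_def]
  rw [h, phiD_mul_prod_map_duniv, phiD_tmul, unop_op]
end

section
/- Let φ : B ⊗_R B → B be an R-linear map satisfying φ(a ⊗ bc) = φ(a ⊗ b)·c for all a, b, c ∈ B, and define D_φ : B → B by D_φ(a) = φ(a ⊗ 1). Then for all b, b₀, b₁, …, b_k ∈ B one has (δ_{b₀} ∘ δ_{b₁} ∘ ⋯ ∘ δ_{b_k})(D_φ)(b) = φ((b ⊗ 1^op)·(db₀)·(db₁)⋯(db_k)), where the product is taken in the algebra B^e. -/
open TensorProduct MulOpposite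

/-- `D_φ : B →ₗ[R] B`, `D_φ a = φ (a ⊗ 1)`. -/
noncomputable def Dphi (R : Type*) {B : Type*} [CommRing R] [Ring B] [Algebra R B]
    (φ : B ⊗[R] Bᵐᵒᵖ →ₗ[R] B) : B →ₗ[R] B :=
  φ ∘ₗ (TensorProduct.mk R B Bᵐᵒᵖ).flip (1 : Bᵐᵒᵖ)

/-- A right `B`-linear map on `Bᵉ` turns left multiplication by `1 ⊗ cᵒᵖ` into right
multiplication by `c`. -/
theorem map_one_tmul_op_mul {R B : Type*} [CommRing R] [Ring B] [Algebra R B]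
    (φ : B ⊗[R] Bᵐᵒᵖ →ₗ[R] B)
    (hφ : ∀ a b c : B, φ (a ⊗ₜ[R] op (b * c)) = φ (a ⊗ₜ[R] op b) * c)
    (c : B) (x : B ⊗[R] Bᵐᵒᵖ) :
    φ (((1 : B) ⊗ₜ[R] op c) * x) = φ x * c := by
  induction x using TensorProduct.induction_on with
  | zero => simp
  | tmul a b =>
    rw [Algebra.TensorProduct.tmul_mul_tmul, one_mul, ← op_unop b, ← op_mul, hφ]
  | add x y hx hy => rw [mul_add, map_add, hx, hy, map_add, add_mul]

theorem tmul_one_mul_duniv {R B : Type*} [CommRing R] [Ring B] [Algebra R B] (b c : B) :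
    (b ⊗ₜ[R] (1 : Bᵐᵒᵖ)) * duniv R c =
      ((1 : B) ⊗ₜ[R] op c) * (b ⊗ₜ[R] (1 : Bᵐᵒᵖ)) - (b * c) ⊗ₜ[R] (1 : Bᵐᵒᵖ) := by
  simp [duniv, mul_sub]

theorem foldr_deltaOp_Dphi_apply {R B : Type*} [CommRing R] [Ring B] [Algebra R B]
    (φ : B ⊗[R] Bᵐᵒᵖ →ₗ[R] B)
    (hφ : ∀ a b c : B, φ (a ⊗ₜ[R] op (b * c)) = φ (a ⊗ₜ[R] op b) * c)
    (l : List B) (b : B) :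
    (l.foldr (deltaOp R) (Dphi R φ)) b =
      φ ((b ⊗ₜ[R] (1 : Bᵐᵒᵖ)) * (l.map (duniv R)).prod) := by
  induction l generalizing b with
  | nil => simp [Dphi]
  | cons c l ih =>
    rw [List.map_cons, List.prod_cons, ← mul_assoc, tmul_one_mul_duniv, sub_mul, map_sub,
      mul_assoc, map_one_tmul_op_mul φ hφ, ← ih, ← ih]
    rfl

theorem stmt1 {R B : Type*} [CommRing R] [Ring B] [Algebra R B]
    (φ : B ⊗[R] Bᵐᵒᵖ →ₗ[R] B)
    (hφ : ∀ a b c : B, φ (a ⊗ₜ[R] op (b * c)) = φ (a ⊗ₜ[R] op b) * c)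
    (b : B) (k : ℕ) (f : Fin (k + 1) → B) :
    ((List.ofFn f).foldr (deltaOp R) (Dphi R φ)) b =
      φ ((b ⊗ₜ[R] (1 : Bᵐᵒᵖ)) * (List.ofFn fun i => duniv R (f i)).prod) := by
  rw [foldr_deltaOp_Dphi_apply φ hφ, List.map_ofFn]
  rfl
end
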